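/- Let Γ be a planar lattice whose Gram matrix with respect to some ℤ-basis has integer entries with greatest common divisor 1, let d be its discriminant, and let Γ* be its dual lattice. Let w, w' ∈ Γ be primitive vectors such that w − w' ∈ d·Γ* and w − w' ∈ 2·Γ, and let Γ_w = ℤw + (w^⊥ ∩ Γ) and Γ_{w'} = ℤw' + (w'^⊥ ∩ Γ) be the associated basic rectangular sublattices. Then [Γ : Γ_w] ≡ [Γ : Γ_{w'}] (mod 2). -/

import Mathlib

noncomputable section

open scoped RealInnerProductSpace

/-- The Euclidean plane. -/
abbrev EucPlane : Type := EuclideanSpace ℝ (Fin 2)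

/-- A vector `w` is primitive in `Λ` if `w ∈ Λ` and it is not a proper integral
multiple of a lattice vector. -/
def IsPrimitiveIn (Λ : AddSubgroup EucPlane) (w : EucPlane) : Prop :=
  w ∈ Λ ∧ ∀ (m : ℤ) (u : EucPlane), u ∈ Λ → w = m • u → m = 1 ∨ m = -1

/-- The additive subgroup of vectors orthogonal to `w`. -/
def perpSubgroup (w : EucPlane) : AddSubgroup EucPlane where
  carrier := {z : EucPlane | ⟪w, z⟫ = 0}
  zero_mem' := by simp
  add_mem' := by
    intro a b ha hb
    simp only [Set.mem_setOf_eq] at *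
    rw [inner_add_right, ha, hb, add_zero]
  neg_mem' := by
    intro a ha
    simp only [Set.mem_setOf_eq] at *
    rw [inner_neg_right, ha, neg_zero]

/-- The dual lattice of `Γ`: all vectors having integral inner product with every
vector of `Γ` (for an integral planar lattice this coincides with `Γ* ∩ ℚΓ`). -/
def dualLattice (Γ : AddSubgroup EucPlane) : AddSubgroup EucPlane where
  carrier := {u : EucPlane | ∀ v ∈ Γ, ∃ k : ℤ, ⟪u, v⟫ = (k : ℝ)}
  zero_mem' := by
    intro v _
    exact ⟨0, by simp⟩
  add_mem' := by
    intro a b ha hb v hv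
    obtain ⟨k, hk⟩ := ha v hv
    obtain ⟨m, hm⟩ := hb v hv
    exact ⟨k + m, by rw [inner_add_left, hk, hm]; push_cast; ring⟩
  neg_mem' := by
    intro a ha v hv
    obtain ⟨k, hk⟩ := ha v hv
    exact ⟨-k, by rw [inner_neg_left, hk]; push_cast; ring⟩

/-- The basic rectangular sublattice `Γ_w = ℤw + (w^⊥ ∩ Γ)` determined by a
primitive vector `w` of `Γ`. -/
def brsSublattice (Γ : AddSubgroup EucPlane) (w : EucPlane) : AddSubgroup EucPlane :=
  AddSubgroup.closure {w} ⊔ (Γ ⊓ perpSubgroup w)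

/-!
The form `⟪w, ·⟫` carries `Γ` onto a subgroup `⟪w, Γ⟫ = ℤg` of `ℤ`, `g ≥ 0`, and `Γ_w` is the
preimage of `ℤ⟪w, w⟫`, so `[Γ : Γ_w] * g = ⟪w, w⟫`. Some vector of the dual lattice pairs to `1`
with the primitive vector `w`; as `d Γ* ⊆ Γ`, this puts `d` in `⟪w, Γ⟫`, i.e. `g ∣ d`. Now
`w - w' ∈ d Γ*` forces `⟪w, Γ⟫ = ⟪w', Γ⟫`, so both indices are norms divided by the same `g`.
Finally, if `w - w' = 2v = du` with `v ∈ Γ` and `u ∈ Γ*`, then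
`⟪w, w⟫ - ⟪w', w'⟫ = 2 ⟪w - w', w' + v⟫ = 2d ⟪u, w' + v⟫` is a multiple of `2d`, hence of `2g`.
-/

section Pairing

variable {E : Type*} [NormedAddCommGroup E] [InnerProductSpace ℝ E]

/-- The subgroup `⟪w, Γ⟫` of `ℝ` formed by the inner products of `w` with the vectors of `Γ`. -/
def pairingSubgroup (Γ : AddSubgroup E) (w : E) : AddSubgroup ℝ :=
  Γ.map (innerₗ E w).toAddMonoidHom

theorem mem_pairingSubgroup {Γ : AddSubgroup E} {w : E} {t : ℝ} :
    t ∈ pairingSubgroup Γ w ↔ ∃ x ∈ Γ, ⟪w, x⟫ = t :=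
  Iff.rfl

theorem inner_mem_pairingSubgroup {Γ : AddSubgroup E} (w : E) {x : E} (hx : x ∈ Γ) :
    ⟪w, x⟫ ∈ pairingSubgroup Γ w :=
  ⟨x, hx, rfl⟩

theorem inner_self_sub_inner_self_of_sub_eq_two_smul {w w' v : E} (h : w - w' = (2 : ℝ) • v) :
    ⟪w, w⟫ - ⟪w', w'⟫ = 2 * ⟪w - w', w' + v⟫ := by
  obtain rfl : w = w' + (2 : ℝ) • v := by rw [← h, add_sub_cancel]
  simp only [add_sub_cancel_left, inner_add_left, inner_add_right, real_inner_smul_left,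
    real_inner_smul_right, real_inner_comm v w']
  ring

theorem gram_det_mem_pairingSubgroup_of_isCoprime {Γ : AddSubgroup E} {v₁ v₂ : E}
    (hv₁ : v₁ ∈ Γ) (hv₂ : v₂ ∈ Γ) {a b c : ℤ} (ha : ⟪v₁, v₁⟫ = (a : ℝ)) (hb : ⟪v₁, v₂⟫ = (b : ℝ))
    (hc : ⟪v₂, v₂⟫ = (c : ℝ)) {p q : ℤ} (hpq : IsCoprime p q) :
    ((a * c - b ^ 2 : ℤ) : ℝ) ∈ pairingSubgroup Γ (p • v₁ + q • v₂) := by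
  obtain ⟨s, t, hst⟩ := hpq
  have hst' : (s * p + t * q : ℝ) = 1 := mod_cast hst
  -- The adjugate Gram matrix applied to `(s, t)`, i.e. `a * c - b ^ 2` times the dual vector that
  -- pairs to `s` with `v₁` and to `t` with `v₂`.
  refine mem_pairingSubgroup.mpr ⟨(s * c - t * b) • v₁ + (t * a - s * b) • v₂,
    Γ.add_mem (Γ.zsmul_mem hv₁ _) (Γ.zsmul_mem hv₂ _), ?_⟩
  simp only [← Int.cast_smul_eq_zsmul ℝ, inner_add_left, inner_add_right, real_inner_smul_left,
    real_inner_smul_right, real_inner_comm v₁ v₂, ha, hb, hc]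
  push_cast
  linear_combination (a * c - b ^ 2 : ℝ) * hst'

end Pairing

theorem exists_eq_zmultiples_natCast_of_le_range {A : Type*} [AddGroupWithOne A]
    {H : AddSubgroup A} (hH : H ≤ (Int.castAddHom A).range) :
    ∃ g : ℕ, H = AddSubgroup.zmultiples (g : A) := by
  obtain ⟨n, hn⟩ := Int.subgroup_cyclic (H.comap (Int.castAddHom A))
  refine ⟨n.natAbs, ?_⟩
  rw [← AddSubgroup.map_comap_eq_self hH, hn, ← AddSubgroup.zmultiples_eq_closure,
    ← Int.zmultiples_natAbs, AddMonoidHom.map_zmultiples]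
  simp only [Int.coe_castAddHom, Int.cast_natCast]

theorem relIndex_zmultiples_zsmul {A : Type*} [AddGroup A] {g : A} (hg : ¬IsOfFinAddOrder g)
    (m : ℤ) :
    (AddSubgroup.zmultiples (m • g)).relIndex (AddSubgroup.zmultiples g) = m.natAbs := by
  have hinj : Function.Injective (zmultiplesHom A g) :=
    injective_zsmul_iff_not_isOfFinAddOrder.mpr hg
  have h := AddSubgroup.relIndex_map_map_of_injective (AddSubgroup.zmultiples m)
    (AddSubgroup.zmultiples 1) hinj
  rw [AddMonoidHom.map_zmultiples, AddMonoidHom.map_zmultiples, Int.zmultiples_one,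
    AddSubgroup.relIndex_top_right, Int.index_zmultiples] at h
  simpa only [zmultiplesHom_apply, one_zsmul] using h

theorem inner_smul_mem_zmultiples {Γ : AddSubgroup EucPlane} {u x : EucPlane}
    (hu : u ∈ dualLattice Γ) (hx : x ∈ Γ) (d : ℝ) :
    ⟪d • u, x⟫ ∈ AddSubgroup.zmultiples d := by
  obtain ⟨k, hk⟩ := hu x hx
  exact ⟨k, by simp [real_inner_smul_left, hk, mul_comm]⟩

theorem mem_dualLattice_closure {s : Set EucPlane} {u : EucPlane}
    (h : ∀ v ∈ s, ∃ k : ℤ, ⟪u, v⟫ = (k : ℝ)) : u ∈ dualLattice (AddSubgroup.closure s) := by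
  have hle : AddSubgroup.closure s ≤
      (Int.castAddHom ℝ).range.comap (innerₗ EucPlane u).toAddMonoidHom :=
    (AddSubgroup.closure_le _).mpr fun v hv => (h v hv).imp fun _ hk => hk.symm
  exact fun v hv => (hle hv).imp fun _ hk => hk.symm

theorem closure_le_dualLattice_closure {s : Set EucPlane}
    (h : ∀ u ∈ s, ∀ v ∈ s, ∃ k : ℤ, ⟪u, v⟫ = (k : ℝ)) :
    AddSubgroup.closure s ≤ dualLattice (AddSubgroup.closure s) :=
  (AddSubgroup.closure_le _).mpr fun u hu => mem_dualLattice_closure (h u hu)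

theorem pairingSubgroup_le_range_intCast {Γ : AddSubgroup EucPlane} {w : EucPlane}
    (hw : w ∈ dualLattice Γ) : pairingSubgroup Γ w ≤ (Int.castAddHom ℝ).range := by
  rintro _ ⟨x, hx, rfl⟩
  exact (hw x hx).imp fun _ hk => hk.symm

theorem pairingSubgroup_le_of_sub_eq_smul {Γ : AddSubgroup EucPlane} {w w' u : EucPlane} {d : ℝ}
    (hd : d ∈ pairingSubgroup Γ w') (hu : u ∈ dualLattice Γ) (h : w - w' = d • u) :
    pairingSubgroup Γ w ≤ pairingSubgroup Γ w' := by
  rintro _ ⟨x, hx, rfl⟩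
  have hdiff : ⟪w - w', x⟫ ∈ pairingSubgroup Γ w' :=
    h ▸ AddSubgroup.zmultiples_le_of_mem hd (inner_smul_mem_zmultiples hu hx d)
  simpa [inner_sub_left] using add_mem hdiff (inner_mem_pairingSubgroup w' hx)

theorem pairingSubgroup_eq_of_sub_eq_smul {Γ : AddSubgroup EucPlane} {w w' u : EucPlane} {d : ℝ}
    (hd : d ∈ pairingSubgroup Γ w) (hd' : d ∈ pairingSubgroup Γ w') (hu : u ∈ dualLattice Γ)
    (h : w - w' = d • u) : pairingSubgroup Γ w = pairingSubgroup Γ w' :=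
  le_antisymm (pairingSubgroup_le_of_sub_eq_smul hd' hu h)
    (pairingSubgroup_le_of_sub_eq_smul hd (neg_mem hu) (by rw [smul_neg, ← h, neg_sub]))

theorem brsSublattice_eq_inf_comap {Γ : AddSubgroup EucPlane} {w : EucPlane} (hw : w ∈ Γ) :
    brsSublattice Γ w =
      Γ ⊓ (AddSubgroup.zmultiples ⟪w, w⟫).comap (innerₗ EucPlane w).toAddMonoidHom := by
  refine le_antisymm (sup_le ?_ (inf_le_inf_left Γ fun z (hz : ⟪w, z⟫ = 0) => ?_)) ?_
  · rw [AddSubgroup.closure_le, Set.singleton_subset_iff]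
    exact ⟨hw, AddSubgroup.mem_zmultiples ⟪w, w⟫⟩
  · exact ⟨0, by simp [hz]⟩
  · rintro x ⟨hx, n, hn : n • ⟪w, w⟫ = ⟪w, x⟫⟩
    have hperp : ⟪w, x - n • w⟫ = 0 := by
      rw [inner_sub_right, ← hn, ← Int.cast_smul_eq_zsmul ℝ n w, real_inner_smul_right,
        zsmul_eq_mul, sub_self]
    exact AddSubgroup.mem_sup.mpr ⟨n • w, AddSubgroup.mem_closure_singleton.mpr ⟨n, rfl⟩,
      x - n • w, ⟨Γ.sub_mem hx (Γ.zsmul_mem hw n), hperp⟩, add_sub_cancel _ _⟩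

theorem relIndex_brsSublattice {Γ : AddSubgroup EucPlane} {w : EucPlane} (hw : w ∈ Γ) :
    (brsSublattice Γ w).relIndex Γ =
      (AddSubgroup.zmultiples ⟪w, w⟫).relIndex (pairingSubgroup Γ w) := by
  rw [brsSublattice_eq_inf_comap hw, AddSubgroup.inf_relIndex_left, AddSubgroup.relIndex_comap,
    pairingSubgroup]

theorem relIndex_brsSublattice_mul {Γ : AddSubgroup EucPlane} {w : EucPlane} (hw : w ∈ Γ) {g : ℝ}
    (hg : 0 ≤ g) (hΓ : pairingSubgroup Γ w = AddSubgroup.zmultiples g) :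
    (brsSublattice Γ w).relIndex Γ * g = ⟪w, w⟫ := by
  obtain ⟨m, hm⟩ : ⟪w, w⟫ ∈ AddSubgroup.zmultiples g := hΓ ▸ inner_mem_pairingSubgroup w hw
  replace hm : m • g = ⟪w, w⟫ := hm
  obtain rfl | hg := hg.eq_or_lt
  · rw [mul_zero, ← hm, smul_zero]
  have hm_nonneg : 0 ≤ m := by
    have h : 0 ≤ (m : ℝ) * g := by
      rw [← zsmul_eq_mul, hm]
      exact real_inner_self_nonneg
    exact_mod_cast nonneg_of_mul_nonneg_left h hg
  lift m to ℕ using hm_nonneg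
  have hindex : (brsSublattice Γ w).relIndex Γ = m := by
    rw [relIndex_brsSublattice hw, hΓ, ← hm,
      relIndex_zmultiples_zsmul (not_isOfFinAddOrder_of_isAddTorsionFree hg.ne'),
      Int.natAbs_natCast]
  rw [hindex, ← hm, natCast_zsmul, nsmul_eq_mul]

theorem relIndex_brsSublattice_modEq {Γ : AddSubgroup EucPlane} {w w' : EucPlane} (hw : w ∈ Γ)
    (hw' : w' ∈ Γ) {g : ℝ} (hg : 0 ≤ g) (hΓ : pairingSubgroup Γ w = AddSubgroup.zmultiples g)
    (hΓ' : pairingSubgroup Γ w' = AddSubgroup.zmultiples g) {n k : ℤ}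
    (hnorm : ⟪w, w⟫ - ⟪w', w'⟫ = n * k * g) :
    (brsSublattice Γ w).relIndex Γ ≡ (brsSublattice Γ w').relIndex Γ [ZMOD n] := by
  have hindex := relIndex_brsSublattice_mul hw hg hΓ
  have hindex' := relIndex_brsSublattice_mul hw' hg hΓ'
  obtain rfl | hg := hg.eq_or_lt
  · obtain rfl : w = 0 := by simpa using hindex.symm
    obtain rfl : w' = 0 := by simpa using hindex'.symm
    rfl
  have hdiff : ((brsSublattice Γ w).relIndex Γ - (brsSublattice Γ w').relIndex Γ : ℝ) = n * k := by
    apply mul_right_cancel₀ hg.ne'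
    rw [sub_mul, hindex, hindex', hnorm]
  exact (Int.modEq_iff_dvd.mpr ⟨k, mod_cast hdiff⟩).symm

theorem relIndex_brsSublattice_modEq_two {Γ : AddSubgroup EucPlane} (hΓ : Γ ≤ dualLattice Γ)
    {w w' u v : EucPlane} (hw : w ∈ Γ) (hw' : w' ∈ Γ) (hu : u ∈ dualLattice Γ) (hv : v ∈ Γ)
    {d : ℝ} (hd : d ∈ pairingSubgroup Γ w) (hd' : d ∈ pairingSubgroup Γ w')
    (hmodd : w - w' = d • u) (hmod2 : w - w' = (2 : ℝ) • v) :
    (brsSublattice Γ w).relIndex Γ ≡ (brsSublattice Γ w').relIndex Γ [MOD 2] := by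
  have hpairing := pairingSubgroup_eq_of_sub_eq_smul hd hd' hu hmodd
  obtain ⟨g, hg⟩ := exists_eq_zmultiples_natCast_of_le_range
    (pairingSubgroup_le_range_intCast (hΓ hw))
  obtain ⟨k, hk⟩ : ⟪w - w', w' + v⟫ ∈ AddSubgroup.zmultiples (g : ℝ) := by
    rw [hmodd, ← hg]
    exact AddSubgroup.zmultiples_le_of_mem hd
      (inner_smul_mem_zmultiples hu (add_mem hw' hv) d)
  have hnorm : ⟪w, w⟫ - ⟪w', w'⟫ = (2 : ℤ) * k * g := by
    rw [inner_self_sub_inner_self_of_sub_eq_two_smul hmod2, ← hk]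
    simp [mul_assoc]
  exact Int.natCast_modEq_iff.mp
    (relIndex_brsSublattice_modEq hw hw' g.cast_nonneg hg (hpairing ▸ hg) hnorm)

theorem IsPrimitiveIn.isCoprime {Γ : AddSubgroup EucPlane} {v₁ v₂ : EucPlane} (hv₁ : v₁ ∈ Γ)
    (hv₂ : v₂ ∈ Γ) {p q : ℤ} (h : IsPrimitiveIn Γ (p • v₁ + q • v₂)) : IsCoprime p q := by
  obtain ⟨p', hp'⟩ := Int.gcd_dvd_left p q
  obtain ⟨q', hq'⟩ := Int.gcd_dvd_right p q
  have hgcd := h.2 (Int.gcd p q) (p' • v₁ + q' • v₂)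
    (add_mem (zsmul_mem hv₁ _) (zsmul_mem hv₂ _))
    (by rw [smul_add, smul_smul, smul_smul, ← hp', ← hq'])
  exact Int.isCoprime_iff_gcd_eq_one.mpr (by omega)

theorem IsPrimitiveIn.gram_det_mem_pairingSubgroup {v₁ v₂ w : EucPlane} {a b c : ℤ}
    (hw : IsPrimitiveIn (AddSubgroup.closure {v₁, v₂}) w)
    (ha : ⟪v₁, v₁⟫ = (a : ℝ)) (hb : ⟪v₁, v₂⟫ = (b : ℝ)) (hc : ⟪v₂, v₂⟫ = (c : ℝ)) :
    ((a * c - b ^ 2 : ℤ) : ℝ) ∈ pairingSubgroup (AddSubgroup.closure {v₁, v₂}) w := by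
  have hv₁ : v₁ ∈ AddSubgroup.closure {v₁, v₂} := AddSubgroup.subset_closure (by simp)
  have hv₂ : v₂ ∈ AddSubgroup.closure {v₁, v₂} := AddSubgroup.subset_closure (by simp)
  obtain ⟨p, q, rfl⟩ := AddSubgroup.mem_closure_pair.mp hw.1
  exact gram_det_mem_pairingSubgroup_of_isCoprime hv₁ hv₂ ha hb hc (hw.isCoprime hv₁ hv₂)

theorem parity_of_brs_index_general
    (Γ : AddSubgroup EucPlane) (v₁ v₂ : EucPlane) (hΓ : Γ = AddSubgroup.closure {v₁, v₂})
    (a b c : ℤ)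
    (ha : ⟪v₁, v₁⟫ = (a : ℝ)) (hb : ⟪v₁, v₂⟫ = (b : ℝ)) (hc : ⟪v₂, v₂⟫ = (c : ℝ))
    (w w' : EucPlane) (hw : IsPrimitiveIn Γ w) (hw' : IsPrimitiveIn Γ w')
    (hmodd : ∃ u ∈ dualLattice Γ, w - w' = (((a * c - b ^ 2 : ℤ)) : ℝ) • u)
    (hmod2 : ∃ v ∈ Γ, w - w' = (2 : ℝ) • v) :
    ((brsSublattice Γ w).addSubgroupOf Γ).index % 2 =
      ((brsSublattice Γ w').addSubgroupOf Γ).index % 2 := by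
  subst hΓ
  obtain ⟨u, hu, hwu⟩ := hmodd
  obtain ⟨v, hv, hwv⟩ := hmod2
  have hintegral : AddSubgroup.closure {v₁, v₂} ≤ dualLattice (AddSubgroup.closure {v₁, v₂}) := by
    apply closure_le_dualLattice_closure
    rintro _ (rfl | rfl) _ (rfl | rfl)
    exacts [⟨a, ha⟩, ⟨b, hb⟩, ⟨b, (real_inner_comm _ _).trans hb⟩, ⟨c, hc⟩]
  exact relIndex_brsSublattice_modEq_two hintegral hw.1 hw'.1 hu hv
    (hw.gram_det_mem_pairingSubgroup ha hb hc) (hw'.gram_det_mem_pairingSubgroup ha hb hc) hwu hwv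

theorem parity_of_brs_index
    (Γ : AddSubgroup EucPlane) (v₁ v₂ : EucPlane)
    (hbasis : LinearIndependent ℝ ![v₁, v₂]) (hΓ : Γ = AddSubgroup.closure {v₁, v₂})
    (a b c : ℤ)
    (ha : ⟪v₁, v₁⟫ = (a : ℝ)) (hb : ⟪v₁, v₂⟫ = (b : ℝ)) (hc : ⟪v₂, v₂⟫ = (c : ℝ))
    (hprim : Int.gcd (Int.gcd a b) c = 1)
    (w w' : EucPlane) (hw : IsPrimitiveIn Γ w) (hw' : IsPrimitiveIn Γ w')
    (hmodd : ∃ u ∈ dualLattice Γ, w - w' = (((a * c - b ^ 2 : ℤ)) : ℝ) • u)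
    (hmod2 : ∃ v ∈ Γ, w - w' = (2 : ℝ) • v) :
    ((brsSublattice Γ w).addSubgroupOf Γ).index % 2 =
      ((brsSublattice Γ w').addSubgroupOf Γ).index % 2 :=
  parity_of_brs_index_general Γ v₁ v₂ hΓ a b c ha hb hc w w' hw hw' hmodd hmod2
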